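/- For every L ≥ 1, the numbers m_L and the moments M_k satisfy the inversion formula m_L = M_L − Σ_{s=0}^{L−1} C(L,s) · M_s, where C(L,s) is the binomial coefficient. -/

import Mathlib

open Filter

/-- The generations of the Calkin–Wilf tree: `CW 0 = [1/1]` is the first
generation, and each generation is obtained from the previous one by replacing
each entry `x` by `x/(x+1)` and `x+1`, in this order.  Thus the `n`-th
generation of the paper is `CW (n-1)`. -/
def CW : ℕ → List ℚ
  | 0 => [1]
  | n + 1 => (CW n).flatMap (fun x => [x / (x + 1), x + 1])

open scoped Classical in
/-- `Fcw n` is the distribution function of the `(n+1)`-st generation of the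
Calkin–Wilf tree: `Fcw (n-1) x = F_n(x) = 2^(1-n) · #{j : x_j^(n) ≤ x}`. -/
noncomputable def Fcw (n : ℕ) (x : ℝ) : ℝ :=
  ((CW n).countP (fun q => decide ((q : ℝ) ≤ x))) / 2 ^ n

open MeasureTheory

/-!
Every entry `x` of a generation has one child `x / (x + 1) < 1` and one child `x + 1 > 1`, so that
`F_{n+1}(t)` is `F_n(t / (1 - t)) / 2` for `t < 1` and `(1 + F_n(t - 1)) / 2` for `t ≥ 1`. In the
limit this says that `2 ∫ φ dμ = ∫ φ (x / (x + 1)) dμ + ∫ φ (x + 1) dμ`, and that `(n, ∞)` has mass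
`2 ^ (-n)` for natural `n`, so all moments are finite. Now `φ = x ^ L` gives
`2 M_L = m_L + ∑_{s ≤ L} C(L, s) M_s`, where the term `s = L` cancels one copy of `M_L`.
-/

section OrderedField

variable {𝕜 : Type*} [Field 𝕜] [LinearOrder 𝕜] [IsStrictOrderedRing 𝕜] {t x : 𝕜}

lemma div_add_one_lt_one (hx : -1 < x) : x / (x + 1) < 1 := by
  rw [div_lt_one (by linarith)]
  exact lt_add_one x

lemma div_add_one_le_iff (hx : -1 < x) (ht : t < 1) : x / (x + 1) ≤ t ↔ x ≤ t / (1 - t) := by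
  rw [div_le_iff₀ (by linarith), le_div_iff₀ (by linarith)]
  constructor <;> intro h <;> linarith

end OrderedField

lemma add_one_pow_eq_sum {R : Type*} [CommSemiring R] (x : R) (n : ℕ) :
    (x + 1) ^ n = ∑ s ∈ Finset.range (n + 1), (n.choose s : R) * x ^ s := by
  simp only [add_pow, one_pow, mul_one, mul_comm]

lemma countP_flatMap_pair {α β : Type*} (p : β → Bool) (f g : α → β) (l : List α) :
    (l.flatMap fun a => [f a, g a]).countP p = l.countP (p ∘ f) + l.countP (p ∘ g) := by
  induction l with
  | nil => simp
  | cons a l ih =>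
    simp only [List.flatMap_cons, List.countP_append, ih, List.countP_cons, List.countP_nil,
      Function.comp_apply]
    omega

section Integration

variable {μ : Measure ℝ}

lemma lintegral_le_tsum_mul_measure_Ioi {g : ℝ → ENNReal} (hpos : ∀ᵐ x ∂μ, 0 < x)
    (hg : MonotoneOn g (Set.Ioi 0)) :
    ∫⁻ x, g x ∂μ ≤ ∑' n : ℕ, g (n + 1) * μ (Set.Ioi n) := by
  have hstep : ∀ᵐ x ∂μ, g x ≤ ∑' n : ℕ, (Set.Ioi (n : ℝ)).indicator (fun _ => g (n + 1)) x := by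
    filter_upwards [hpos] with x hx
    obtain ⟨n, hn⟩ := Nat.exists_eq_add_one.2 (Nat.ceil_pos.2 hx)
    obtain ⟨hnx, hxn⟩ := (Nat.ceil_eq_iff n.succ_ne_zero).1 hn
    push_cast [Nat.add_sub_cancel] at hnx hxn
    calc g x ≤ g (n + 1) := hg hx (hx.trans_le hxn) hxn
      _ = (Set.Ioi (n : ℝ)).indicator (fun _ => g (n + 1)) x := by
        rw [Set.indicator_of_mem (Set.mem_Ioi.2 hnx)]
      _ ≤ _ := ENNReal.le_tsum (f := fun m : ℕ =>
        (Set.Ioi (m : ℝ)).indicator (fun _ => g (m + 1)) x) n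
  refine (lintegral_mono_ae hstep).trans_eq ?_
  rw [lintegral_tsum fun n => (measurable_const.indicator measurableSet_Ioi).aemeasurable]
  simp only [lintegral_indicator_const measurableSet_Ioi]

lemma integrable_pow_of_measure_Ioi_le_geometric {C r : ℝ} (hr₀ : 0 < r) (hr₁ : r < 1)
    (hpos : ∀ᵐ x ∂μ, 0 < x) (htail : ∀ n : ℕ, μ (Set.Ioi n) ≤ ENNReal.ofReal (C * r ^ n))
    (k : ℕ) : Integrable (fun x => x ^ k) μ := by
  have hsum : Summable fun n : ℕ => ((n : ℝ) + 1) ^ k * (C * r ^ n) := by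
    have hgeom := (summable_nat_add_iff 1).2
      (summable_pow_mul_geometric_of_norm_lt_one k (r := r) (by rwa [Real.norm_of_nonneg hr₀.le]))
    refine (hgeom.mul_left (C / r)).congr fun n => ?_
    push_cast
    field_simp
    ring
  have hmono : MonotoneOn (fun x : ℝ => ENNReal.ofReal (x ^ k)) (Set.Ioi 0) :=
    fun x hx y _ hxy => ENNReal.ofReal_le_ofReal (pow_le_pow_left₀ (Set.mem_Ioi.1 hx).le hxy k)
  refine ⟨by fun_prop, ?_⟩
  rw [hasFiniteIntegral_iff_ofReal (hpos.mono fun x hx => pow_nonneg hx.le k)]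
  calc ∫⁻ x, ENNReal.ofReal (x ^ k) ∂μ
      ≤ ∑' n : ℕ, ENNReal.ofReal (((n : ℝ) + 1) ^ k) * μ (Set.Ioi n) :=
        lintegral_le_tsum_mul_measure_Ioi hpos hmono
    _ ≤ ∑' n : ℕ, ENNReal.ofReal (((n : ℝ) + 1) ^ k * (C * r ^ n)) := by
        refine ENNReal.tsum_le_tsum fun n => ?_
        rw [ENNReal.ofReal_mul (by positivity)]
        gcongr
        exact htail n
    _ < ⊤ := hsum.tsum_ofReal_lt_top

lemma real_Iic_eq_zero_of_tendsto_real_Ioc [IsProbabilityMeasure μ] {a : ℝ}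
    (h : Tendsto (fun n : ℕ => μ.real (Set.Ioc a n)) atTop (nhds 1)) :
    μ.real (Set.Iic a) = 0 := by
  have hIoi : 1 ≤ μ.real (Set.Ioi a) :=
    le_of_tendsto' h fun n => measureReal_mono Set.Ioc_subset_Ioi_self
  rw [← Set.compl_Iic, probReal_compl_eq_one_sub measurableSet_Iic] at hIoi
  exact le_antisymm (by linarith) measureReal_nonneg

end Integration

lemma integral_add_integral_of_add_self_eq_map_add_map {α E : Type*} [MeasurableSpace α]
    [NormedAddCommGroup E] [NormedSpace ℝ E] {μ : Measure α} {f g : α → α} {φ : α → E}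
    (hf : Measurable f) (hg : Measurable g) (hμ : μ + μ = μ.map f + μ.map g)
    (hφ : StronglyMeasurable φ) (hφf : Integrable (fun x => φ (f x)) μ)
    (hφg : Integrable (fun x => φ (g x)) μ) :
    ∫ x, φ x ∂μ + ∫ x, φ x ∂μ = ∫ x, φ (f x) ∂μ + ∫ x, φ (g x) ∂μ := by
  have hmap : Integrable φ (μ.map f + μ.map g) :=
    ((integrable_map_measure hφ.aestronglyMeasurable hf.aemeasurable).2 hφf).add_measure
      ((integrable_map_measure hφ.aestronglyMeasurable hg.aemeasurable).2 hφg)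
  have hφμ : Integrable φ μ := (hμ ▸ hmap).left_of_add_measure
  rw [← integral_add_measure hφμ hφμ, hμ,
    integral_add_measure hmap.left_of_add_measure hmap.right_of_add_measure,
    integral_map hf.aemeasurable hφ.aestronglyMeasurable,
    integral_map hg.aemeasurable hφ.aestronglyMeasurable]

section Pushforward

variable {μ : Measure ℝ} {t : ℝ}

lemma map_add_one_real_Iic :
    (μ.map (fun x => x + 1)).real (Set.Iic t) = μ.real (Set.Iic (t - 1)) := by
  rw [map_measureReal_apply (by fun_prop) measurableSet_Iic, Set.preimage_add_const_Iic]

lemma map_div_add_one_real_Iic_of_lt_one (hμ : ∀ᵐ x ∂μ, -1 < x) (ht : t < 1) :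
    (μ.map (fun x => x / (x + 1))).real (Set.Iic t) = μ.real (Set.Iic (t / (1 - t))) := by
  rw [map_measureReal_apply (by fun_prop) measurableSet_Iic]
  refine measureReal_congr ?_
  filter_upwards [hμ] with x hx
  exact propext (div_add_one_le_iff hx ht)

lemma map_div_add_one_real_Iic_of_one_le (hμ : ∀ᵐ x ∂μ, -1 < x) (ht : 1 ≤ t) :
    (μ.map (fun x => x / (x + 1))).real (Set.Iic t) = μ.real Set.univ := by
  rw [map_measureReal_apply (by fun_prop) measurableSet_Iic]
  refine measureReal_congr ?_
  filter_upwards [hμ] with x hx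
  exact propext (iff_true_intro ((div_add_one_lt_one hx).le.trans ht))

end Pushforward

lemma pos_of_mem_CW {n : ℕ} {q : ℚ} (hq : q ∈ CW n) : 0 < q := by
  induction n generalizing q with
  | zero => simp_all [CW]
  | succ n ih =>
    simp only [CW, List.mem_flatMap, List.mem_cons, List.not_mem_nil, or_false] at hq
    obtain ⟨a, ha, rfl | rfl⟩ := hq <;> have := ih ha <;> positivity

lemma length_CW (n : ℕ) : (CW n).length = 2 ^ n := by
  induction n with
  | zero => simp [CW]
  | succ n ih => simp [CW, List.length_flatMap, ih, pow_succ]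

open scoped Classical in
/- In `Fcw` the bound variable `q` is elaborated as a real number, so that the list `CW n` is
coerced to `List ℝ` through the list monad. -/
lemma Fcw_eq_countP (n : ℕ) (x : ℝ) :
    Fcw n x = (CW n).countP (fun q : ℚ => decide ((q : ℝ) ≤ x)) / 2 ^ n := by
  have hcoe : (do let q ← CW n; pure (q : ℝ)) = (CW n).map (fun q : ℚ => (q : ℝ)) := by
    simp [List.map_eq_flatMap]
  rw [Fcw, hcoe, List.countP_map]
  rfl

open scoped Classical in
lemma Fcw_succ (n : ℕ) (x : ℝ) :
    Fcw (n + 1) x = ((CW n).countP (fun q : ℚ => decide ((q : ℝ) / (q + 1) ≤ x)) +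
      (CW n).countP (fun q : ℚ => decide ((q : ℝ) + 1 ≤ x))) / 2 ^ (n + 1) := by
  rw [Fcw_eq_countP, CW, countP_flatMap_pair]
  simp [Function.comp_def]

lemma Fcw_of_nonpos (n : ℕ) {x : ℝ} (hx : x ≤ 0) : Fcw n x = 0 := by
  rw [Fcw_eq_countP, List.countP_eq_zero.2]
  · simp
  · intro q hq
    have hq_pos : (0 : ℝ) < q := Rat.cast_pos.2 (pos_of_mem_CW hq)
    simpa using hx.trans_lt hq_pos

lemma Fcw_succ_of_one_le (n : ℕ) {x : ℝ} (hx : 1 ≤ x) :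
    Fcw (n + 1) x = (1 + Fcw n (x - 1)) / 2 := by
  classical
  have hleft : (CW n).countP (fun q : ℚ => decide ((q : ℝ) / (q + 1) ≤ x)) = 2 ^ n := by
    rw [← length_CW n, List.countP_eq_length]
    intro q hq
    have hq_pos : (0 : ℝ) < q := Rat.cast_pos.2 (pos_of_mem_CW hq)
    simpa using (div_add_one_lt_one (by linarith)).le.trans hx
  rw [Fcw_succ, hleft, Fcw_eq_countP]
  simp only [le_sub_iff_add_le]
  push_cast
  field_simp
  ring

lemma Fcw_succ_of_lt_one (n : ℕ) {x : ℝ} (hx : x < 1) :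
    Fcw (n + 1) x = Fcw n (x / (1 - x)) / 2 := by
  classical
  have hleft : (CW n).countP (fun q : ℚ => decide ((q : ℝ) / (q + 1) ≤ x)) =
      (CW n).countP (fun q : ℚ => decide ((q : ℝ) ≤ x / (1 - x))) := by
    refine List.countP_congr fun q hq => ?_
    have hq_pos : (0 : ℝ) < q := Rat.cast_pos.2 (pos_of_mem_CW hq)
    simpa using div_add_one_le_iff (by linarith) hx
  have hright : (CW n).countP (fun q : ℚ => decide ((q : ℝ) + 1 ≤ x)) = 0 := by
    refine List.countP_eq_zero.2 fun q hq => ?_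
    have hq_pos : (0 : ℝ) < q := Rat.cast_pos.2 (pos_of_mem_CW hq)
    simpa using (by linarith : x < q + 1)
  rw [Fcw_succ, hleft, hright, Fcw_eq_countP]
  push_cast
  field_simp
  ring

lemma tendsto_Fcw_of_one_le {x a : ℝ} (hx : 1 ≤ x)
    (h : Tendsto (fun n => Fcw n (x - 1)) atTop (nhds a)) :
    Tendsto (fun n => Fcw n x) atTop (nhds ((1 + a) / 2)) := by
  rw [← tendsto_add_atTop_iff_nat 1]
  simpa only [Fcw_succ_of_one_le _ hx] using (h.const_add 1).div_const 2

lemma tendsto_Fcw_of_lt_one {x a : ℝ} (hx : x < 1)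
    (h : Tendsto (fun n => Fcw n (x / (1 - x))) atTop (nhds a)) :
    Tendsto (fun n => Fcw n x) atTop (nhds (a / 2)) := by
  rw [← tendsto_add_atTop_iff_nat 1]
  simpa only [Fcw_succ_of_lt_one _ hx] using h.div_const 2

lemma tendsto_Fcw_of_nonpos {x : ℝ} (hx : x ≤ 0) :
    Tendsto (fun n => Fcw n x) atTop (nhds 0) := by
  simp only [Fcw_of_nonpos _ hx, tendsto_const_nhds]

lemma tendsto_Fcw_natCast (m : ℕ) :
    Tendsto (fun n => Fcw n m) atTop (nhds (1 - (1 / 2) ^ m)) := by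
  induction m with
  | zero => simpa using tendsto_Fcw_of_nonpos le_rfl
  | succ m ih =>
    have hm : (1 : ℝ) ≤ (m + 1 : ℕ) := by exact_mod_cast m.succ_pos
    have hlim := tendsto_Fcw_of_one_le (a := 1 - (1 / 2) ^ m) hm
      (by simpa only [Nat.cast_add_one, add_sub_cancel_right] using ih)
    convert hlim using 2
    ring

/-- `μ` is the limit distribution of the generations of the Calkin–Wilf tree. Since this is asked
at every real point, negative ones included, it forces a finite `μ` to be carried by `(0, ∞)`. -/
def IsCalkinWilfLimit (μ : Measure ℝ) : Prop :=
  ∀ x : ℝ, Tendsto (fun n => Fcw n x) atTop (nhds (μ.real (Set.Iic x)))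

/-- `μ` is stationary for the random walk that moves from `x` to one of its two children
`x / (x + 1)` and `x + 1` in the Calkin–Wilf tree, each with probability `1 / 2`. The equation is
multiplied by `2` to avoid scalars. -/
def IsCalkinWilfStationary (μ : Measure ℝ) : Prop :=
  μ + μ = μ.map (fun x => x / (x + 1)) + μ.map (fun x => x + 1)

namespace IsCalkinWilfLimit

variable {μ : Measure ℝ}

lemma real_Iic_of_nonpos (h : IsCalkinWilfLimit μ) {x : ℝ} (hx : x ≤ 0) :
    μ.real (Set.Iic x) = 0 :=
  tendsto_nhds_unique (h x) (tendsto_Fcw_of_nonpos hx)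

lemma real_Iic_of_one_le (h : IsCalkinWilfLimit μ) {x : ℝ} (hx : 1 ≤ x) :
    μ.real (Set.Iic x) = (1 + μ.real (Set.Iic (x - 1))) / 2 :=
  tendsto_nhds_unique (h x) (tendsto_Fcw_of_one_le hx (h (x - 1)))

lemma real_Iic_of_lt_one (h : IsCalkinWilfLimit μ) {x : ℝ} (hx : x < 1) :
    μ.real (Set.Iic x) = μ.real (Set.Iic (x / (1 - x))) / 2 :=
  tendsto_nhds_unique (h x) (tendsto_Fcw_of_lt_one hx (h _))

lemma ae_pos [IsFiniteMeasure μ] (h : IsCalkinWilfLimit μ) : ∀ᵐ x ∂μ, 0 < x := by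
  have hnull : μ (Set.Iic 0) = 0 := (measureReal_eq_zero_iff).1 (h.real_Iic_of_nonpos le_rfl)
  simpa [ae_iff, Set.Iic] using hnull

variable [IsProbabilityMeasure μ]

lemma real_Ioi_natCast (h : IsCalkinWilfLimit μ) (n : ℕ) :
    μ.real (Set.Ioi n) = (1 / 2) ^ n := by
  rw [← Set.compl_Iic, probReal_compl_eq_one_sub measurableSet_Iic,
    tendsto_nhds_unique (h n) (tendsto_Fcw_natCast n), sub_sub_cancel]

lemma integrable_pow (h : IsCalkinWilfLimit μ) (k : ℕ) : Integrable (fun x => x ^ k) μ := by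
  refine integrable_pow_of_measure_Ioi_le_geometric (C := 1) (r := 1 / 2) (by norm_num)
    (by norm_num) h.ae_pos (fun n => ?_) k
  rw [one_mul, ← h.real_Ioi_natCast, ofReal_measureReal]

lemma isCalkinWilfStationary (h : IsCalkinWilfLimit μ) : IsCalkinWilfStationary μ := by
  have hgt : ∀ᵐ x ∂μ, -1 < x := h.ae_pos.mono fun x hx => by linarith
  refine Measure.ext_of_Iic _ _ fun t => ?_
  rw [← measureReal_eq_measureReal_iff, measureReal_add_apply, measureReal_add_apply,
    map_add_one_real_Iic]
  rcases lt_or_ge t 1 with ht | ht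
  · rw [map_div_add_one_real_Iic_of_lt_one hgt ht, h.real_Iic_of_lt_one ht,
      h.real_Iic_of_nonpos (by linarith : t - 1 ≤ 0)]
    ring
  · rw [map_div_add_one_real_Iic_of_one_le hgt ht, h.real_Iic_of_one_le ht, probReal_univ]
    ring

end IsCalkinWilfLimit

theorem IsCalkinWilfStationary.integral_div_add_one_pow {μ : Measure ℝ} {L : ℕ}
    (h : IsCalkinWilfStationary μ) (hnonneg : ∀ᵐ x ∂μ, 0 ≤ x)
    (hint : ∀ s ≤ L, Integrable (fun x => x ^ s) μ) :
    ∫ x, (x / (x + 1)) ^ L ∂μ =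
      (∫ x, x ^ L ∂μ) -
        ∑ s ∈ Finset.range L, (L.choose s : ℝ) * ∫ x, x ^ s ∂μ := by
  have hterm : ∀ s ∈ Finset.range (L + 1), Integrable (fun x => (L.choose s : ℝ) * x ^ s) μ :=
    fun s hs => (hint s (Finset.mem_range_succ_iff.1 hs)).const_mul _
  have hleft : Integrable (fun x => (x / (x + 1)) ^ L) μ := by
    refine (hint L le_rfl).mono'
      (by fun_prop : Measurable fun x : ℝ => (x / (x + 1)) ^ L).aestronglyMeasurable ?_
    filter_upwards [hnonneg] with x hx
    rw [Real.norm_of_nonneg (by positivity)]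
    exact pow_le_pow_left₀ (by positivity) (div_le_self hx (by linarith)) L
  have hright : Integrable (fun x => (x + 1) ^ L) μ := by
    simpa only [add_one_pow_eq_sum] using integrable_finsetSum _ hterm
  have hbinom : ∫ x, (x + 1) ^ L ∂μ =
      ∑ s ∈ Finset.range L, (L.choose s : ℝ) * ∫ x, x ^ s ∂μ + ∫ x, x ^ L ∂μ := by
    simp only [add_one_pow_eq_sum]
    rw [integral_finsetSum _ hterm, Finset.sum_range_succ]
    simp only [integral_const_mul, Nat.choose_self, Nat.cast_one, one_mul]
  have hsplit := integral_add_integral_of_add_self_eq_map_add_map (φ := fun x => x ^ L)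
    (by fun_prop) (by fun_prop) h (by fun_prop) hleft hright
  linarith

section Stieltjes

variable {F : ℝ → ℝ} {μ : Measure ℝ}

lemma real_Ioc_zero_of_tendsto_Fcw
    (hF : ∀ x : ℝ, 0 ≤ x → Tendsto (fun n => Fcw n x) atTop (nhds (F x)))
    (hμ : ∀ x : ℝ, 0 ≤ x → μ (Set.Ioc 0 x) = ENNReal.ofReal (F x - F 0))
    {x : ℝ} (hx : 0 ≤ x) : μ.real (Set.Ioc 0 x) = F x := by
  have hF_zero : F 0 = 0 := tendsto_nhds_unique (hF 0 le_rfl) (tendsto_Fcw_of_nonpos le_rfl)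
  have hF_nonneg : 0 ≤ F x := ge_of_tendsto' (hF x hx) fun n => by unfold Fcw; positivity
  rw [measureReal_def, hμ x hx, hF_zero, sub_zero, ENNReal.toReal_ofReal hF_nonneg]

lemma isCalkinWilfLimit_of_tendsto_Fcw [IsProbabilityMeasure μ]
    (h : ∀ x : ℝ, 0 ≤ x → Tendsto (fun n => Fcw n x) atTop (nhds (μ.real (Set.Ioc 0 x)))) :
    IsCalkinWilfLimit μ := by
  have hIoc (m : ℕ) : 1 - (1 / 2) ^ m = μ.real (Set.Ioc 0 (m : ℝ)) :=
    tendsto_nhds_unique (tendsto_Fcw_natCast m) (h m m.cast_nonneg)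
  have hnull : μ.real (Set.Iic 0) = 0 := by
    refine real_Iic_eq_zero_of_tendsto_real_Ioc ?_
    simpa only [hIoc, sub_zero] using
      (tendsto_pow_atTop_nhds_zero_of_lt_one (r := (1 / 2 : ℝ)) (by norm_num)
        (by norm_num)).const_sub 1
  intro x
  rcases le_total x 0 with hx | hx
  · have hIic : μ.real (Set.Iic x) = 0 :=
      le_antisymm (hnull ▸ measureReal_mono (Set.Iic_subset_Iic.2 hx)) measureReal_nonneg
    simpa only [hIic] using tendsto_Fcw_of_nonpos hx
  · rw [← Set.Iic_union_Ioc_eq_Iic hx,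
      measureReal_union (Set.Iic_disjoint_Ioc le_rfl) measurableSet_Ioc, hnull, zero_add]
    exact h x hx

end Stieltjes

/-- Let `F` be the limit distribution function of the Calkin–Wilf tree and `μ`
its Lebesgue–Stieltjes (probability) measure, so that `μ(a,b] = F(b) − F(a)`.
With `M_k = ∫ x^k dμ` and `m_k = ∫ (x/(x+1))^k dμ`, one has the inversion
formula `m_L = M_L − ∑_{s=0}^{L−1} C(L,s)·M_s` for every `L ≥ 1`. -/
theorem calkin_wilf_m_inversion (F : ℝ → ℝ)
    (hF : ∀ x : ℝ, 0 ≤ x → Tendsto (fun n => Fcw n x) atTop (nhds (F x)))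
    (μ : Measure ℝ) (hprob : IsProbabilityMeasure μ)
    (hμ : ∀ a b : ℝ, a ≤ b → μ (Set.Ioc a b) = ENNReal.ofReal (F b - F a))
    (L : ℕ) (hL : 1 ≤ L) :
    ∫ x, (x / (x + 1)) ^ L ∂μ =
      (∫ x, x ^ L ∂μ) -
        ∑ s ∈ Finset.range L, (L.choose s : ℝ) * ∫ x, x ^ s ∂μ := by
  have hlim : IsCalkinWilfLimit μ := isCalkinWilfLimit_of_tendsto_Fcw fun x hx => by
    simpa only [real_Ioc_zero_of_tendsto_Fcw hF (hμ 0) hx] using hF x hx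
  exact hlim.isCalkinWilfStationary.integral_div_add_one_pow
    (hlim.ae_pos.mono fun _ => le_of_lt) fun s _ => hlim.integrable_pow s
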